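/- arXiv:1309.4882 — 3 statements merged into one kernel-verified Lean document; each statement's English description precedes it below -/
import Mathlib

section
/- (Markov's theorem) Let p be a real polynomial of degree at most d such that |p(x)| ≤ 1 for all x ∈ [-1,1]. Then the derivative p' of p satisfies |p'(x)| ≤ d² for all x ∈ [-1,1]. -/
/-!
Bernstein's and Markov's inequalities both follow from Schur's inequality: a polynomial `q` of
degree less than `n` with `|q x| * √(1 - x ^ 2) ≤ M` on `[-1, 1]` satisfies `|q x| ≤ n * M` there.
Away from the endpoints this holds because `√(1 - x ^ 2) ≥ 1 / n`. To the right of all zeros of the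
Chebyshev polynomial `T n`, Lagrange interpolation of `q` and `U (n - 1) = (T n)' / n` at those
zeros has coefficients of constant sign for `U (n - 1)`, so a comparison at the zeros, where
`|U (n - 1) x| * √(1 - x ^ 2) = 1`, gives `|q x| ≤ M * U (n - 1) x ≤ n * M`.

For Bernstein's inequality, write `p (cos (θ + ψ)) - p (cos (θ - ψ)) = 2 * r (cos ψ) * sin ψ` and
apply Schur's inequality to `r` at `1`, the limit `ψ → 0`, where `r 1 = -p' (cos θ) * sin θ`.
Markov's inequality is Schur's inequality for `p'`, whose hypothesis is Bernstein's inequality.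
-/

section InterpolationAtRoots

open Polynomial Lagrange

variable {F ι : Type*} [Field F] {s : Finset ι} {v : ι → F}

lemma eval_lagrange_basis_mul_eval_derivative_nodal [DecidableEq ι] (hvs : Set.InjOn v s) {i : ι}
    (hi : i ∈ s) (x : F) :
    (Lagrange.basis s v i).eval x * (derivative (nodal s v)).eval (v i) =
      (nodal (s.erase i) v).eval x := by
  have hderiv : (derivative (nodal s v)).eval (v i) ≠ 0 := by
    rw [ne_eq, ← inv_eq_zero, ← nodalWeight_eq_eval_derivative_nodal hi]
    exact nodalWeight_ne_zero hvs hi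
  rw [basis_eq_prod_sub_inv_mul_nodal_div hi, ← nodal_erase_eq_nodal_div hi, eval_mul, eval_C,
    nodalWeight_eq_eval_derivative_nodal hi, mul_right_comm,
    inv_mul_cancel₀ hderiv, one_mul]

lemma eval_eq_sum_eval_mul_eval_lagrange_basis [DecidableEq ι] (hvs : Set.InjOn v s)
    {q : F[X]} (hq : q.degree < s.card) (x : F) :
    q.eval x = ∑ i ∈ s, q.eval (v i) * (Lagrange.basis s v i).eval x := by
  conv_lhs => rw [eq_interpolate hvs hq]
  simp only [interpolate_apply, eval_finsetSum, eval_mul, eval_C]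

variable [LinearOrder F] [IsStrictOrderedRing F]

lemma abs_eval_le_mul_eval_derivative_nodal (hvs : Set.InjOn v s) {q : F[X]}
    (hq : q.degree < s.card) {M : F}
    (hqM : ∀ i ∈ s, |q.eval (v i)| ≤ M * |(derivative (nodal s v)).eval (v i)|)
    {x : F} (hx : ∀ i ∈ s, v i ≤ x) :
    |q.eval x| ≤ M * (derivative (nodal s v)).eval x := by
  classical
  have nodal_erase_nonneg (i : ι) : 0 ≤ (nodal (s.erase i) v).eval x := by
    rw [eval_nodal]
    exact Finset.prod_nonneg fun j hj => sub_nonneg.mpr (hx j (Finset.mem_of_mem_erase hj))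
  calc |q.eval x|
      ≤ ∑ i ∈ s, |q.eval (v i)| * |(Lagrange.basis s v i).eval x| := by
        rw [eval_eq_sum_eval_mul_eval_lagrange_basis hvs hq]
        simpa only [abs_mul] using Finset.abs_sum_le_sum_abs
          (fun i => q.eval (v i) * (Lagrange.basis s v i).eval x) s
    _ ≤ ∑ i ∈ s, M * |(derivative (nodal s v)).eval (v i)| *
          |(Lagrange.basis s v i).eval x| := by
        gcongr with i hi
        exact hqM i hi
    _ = ∑ i ∈ s, M * (nodal (s.erase i) v).eval x := by
        refine Finset.sum_congr rfl fun i hi => ?_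
        rw [mul_assoc, mul_comm |eval (v i) _|, ← abs_mul,
          eval_lagrange_basis_mul_eval_derivative_nodal hvs hi,
          abs_of_nonneg (nodal_erase_nonneg i)]
    _ = M * (derivative (nodal s v)).eval x := by
        rw [derivative_nodal, eval_finsetSum, Finset.mul_sum]

lemma abs_eval_le_mul_eval_derivative_of_splits {P q : F[X]} (hP : P.Splits)
    (hroots : P.roots.Nodup) (hlead : 0 ≤ P.leadingCoeff) (hdeg : q.degree < P.natDegree) {M : F}
    (hqM : ∀ c ∈ P.roots, |q.eval c| ≤ M * |(derivative P).eval c|)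
    {x : F} (hx : ∀ c ∈ P.roots, c ≤ x) :
    |q.eval x| ≤ M * (derivative P).eval x := by
  have hP_nodal : P = C P.leadingCoeff * nodal P.roots.toFinset id := by
    conv_lhs => rw [hP.eq_prod_roots, ← Multiset.dedup_eq_self.mpr hroots]
    rfl
  have hP' (y : F) : (derivative P).eval y =
      P.leadingCoeff * (derivative (nodal P.roots.toFinset id)).eval y := by
    conv_lhs => rw [hP_nodal, derivative_C_mul, eval_mul, eval_C]
  have hcard : P.roots.toFinset.card = P.natDegree := by
    rw [Multiset.toFinset_card_of_nodup hroots, hP.natDegree_eq_card_roots]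
  rw [hP', ← mul_assoc]
  refine abs_eval_le_mul_eval_derivative_nodal Function.injective_id.injOn (hcard ▸ hdeg)
    (fun c hc => ?_) fun c hc => hx c (Multiset.mem_toFinset.mp hc)
  simpa only [hP', abs_mul, abs_of_nonneg hlead, mul_assoc] using!
    hqM c (Multiset.mem_toFinset.mp hc)

end InterpolationAtRoots

section Chebyshev

open Polynomial Polynomial.Chebyshev Real

lemma eval_U_sub_one_cos_mul_sin (n : ℤ) (θ : ℝ) :
    (U ℝ (n - 1)).eval (cos θ) * sin θ = sin (n * θ) := by
  simp

lemma degree_U_sub_one_lt (n : ℕ) : (U ℝ (n - 1)).degree < n := by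
  rcases n with _ | m
  · simp
  · rw [Nat.cast_succ, add_sub_cancel_right, degree_U_natCast]
    exact_mod_cast m.lt_succ_self

lemma eval_derivative_T_cos_mul_sin (n : ℤ) (θ : ℝ) :
    (derivative (T ℝ n)).eval (cos θ) * sin θ = n * sin (n * θ) := by
  simp only [T_derivative_eq_U, eval_mul, eval_intCast, mul_assoc, eval_U_sub_one_cos_mul_sin]

lemma eval_T_cos_add_sub_eval_T_cos_sub (n : ℤ) (θ ψ : ℝ) :
    (T ℝ n).eval (cos (θ + ψ)) - (T ℝ n).eval (cos (θ - ψ)) =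
      -2 * sin (n * θ) * sin (n * ψ) := by
  rw [T_real_cos, T_real_cos, mul_add, mul_sub, cos_add, cos_sub]
  ring

lemma splits_T_real (n : ℕ) : (T ℝ n).Splits := by
  rw [splits_iff_card_roots, roots_T_real, Finset.card_val,
    Finset.card_image_of_injOn ((Finset.range n).nodup_map_iff_injOn.mp (roots_T_real_nodup n))]
  simp

lemma le_cos_of_mem_roots_T_real {n : ℕ} {c : ℝ} (hc : c ∈ (T ℝ n).roots) :
    c ≤ cos (π / (2 * n)) := by
  rw [roots_T_real, Finset.mem_val] at hc
  obtain ⟨k, hk, rfl⟩ := Finset.mem_image.mp hc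
  have hkn : (k : ℝ) + 1 ≤ n := mod_cast Finset.mem_range.mp hk
  have hn : (0 : ℝ) < n := by linarith [k.cast_nonneg (α := ℝ)]
  refine cos_le_cos_of_nonneg_of_le_pi (by positivity) ?_ ?_
  · rw [div_le_iff₀ (by positivity)]
    nlinarith [pi_pos]
  · gcongr
    exact le_mul_of_one_le_left pi_pos.le (by linarith [k.cast_nonneg (α := ℝ)])

lemma abs_le_one_of_mem_roots_T_real {n : ℕ} {c : ℝ} (hc : c ∈ (T ℝ n).roots) : |c| ≤ 1 := by
  rw [roots_T_real, Finset.mem_val] at hc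
  obtain ⟨k, -, rfl⟩ := Finset.mem_image.mp hc
  exact abs_cos_le_one _

lemma abs_eval_derivative_T_mul_sqrt_of_mem_roots {n : ℕ} {c : ℝ} (hc : c ∈ (T ℝ n).roots) :
    |(derivative (T ℝ n)).eval c| * √(1 - c ^ 2) = n := by
  have hTc : (T ℝ n).eval c = 0 := isRoot_of_mem_roots hc
  obtain ⟨hc_ge, hc_le⟩ := abs_le.mp (abs_le_one_of_mem_roots_T_real hc)
  have hcos : cos (arccos c) = c := cos_arccos hc_ge hc_le
  have hcos_mul : cos (n * arccos c) = 0 := by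
    rw [← hTc, ← hcos, T_real_cos, hcos, Int.cast_natCast]
  have hsin_mul : |sin (n * arccos c)| = 1 := by
    rw [abs_sin_eq_sqrt_one_sub_cos_sq, hcos_mul]
    simp
  have h := congrArg abs (eval_derivative_T_cos_mul_sin n (arccos c))
  rwa [hcos, sin_arccos, abs_mul, abs_mul, abs_of_nonneg (sqrt_nonneg _), Int.cast_natCast,
    hsin_mul, Nat.abs_cast, mul_one] at h

lemma eval_derivative_T_le_sq (n : ℤ) {x : ℝ} (hx : |x| ≤ 1) :
    (derivative (T ℝ n)).eval x ≤ (n : ℝ) ^ 2 := by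
  rw [← derivative_T_eval_one]
  exact (le_abs_self _).trans (abs_iterate_derivative_T_real_le n 1 hx)

end Chebyshev

section SchurInequality

open Polynomial Polynomial.Chebyshev Real

lemma one_le_mul_sqrt_one_sub_sq {n : ℕ} (hn : n ≠ 0) {x : ℝ} (hx : |x| ≤ cos (π / (2 * n))) :
    1 ≤ n * √(1 - x ^ 2) := by
  have hn1 : (1 : ℝ) ≤ n := mod_cast Nat.one_le_iff_ne_zero.mpr hn
  have hπn : π / (2 * n) ≤ π / 2 := by
    gcongr
    linarith
  have hjordan : 2 / π * (π / (2 * n)) ≤ sin (π / (2 * n)) := mul_le_sin (by positivity) hπn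
  have hsin : sin (π / (2 * n)) ≤ √(1 - x ^ 2) := by
    refine le_sqrt_of_sq_le ?_
    rw [sin_sq, ← sq_abs x]
    gcongr
  calc (1 : ℝ) = n * (2 / π * (π / (2 * n))) := by field_simp
    _ ≤ n * √(1 - x ^ 2) := by gcongr; exact hjordan.trans hsin

variable {n : ℕ} {q : ℝ[X]} {M : ℝ}

lemma abs_eval_le_mul_of_cos_le (hq : q.degree < n)
    (hqM : ∀ x ∈ Set.Icc (-1 : ℝ) 1, |q.eval x| * √(1 - x ^ 2) ≤ M)
    {x : ℝ} (hx : |x| ≤ 1) (hcos : cos (π / (2 * n)) ≤ x) : |q.eval x| ≤ n * M := by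
  have hM : 0 ≤ M := le_trans (by positivity) (hqM 0 (by simp))
  have at_root : ∀ c ∈ (T ℝ n).roots, |q.eval c| ≤ M / n * |(derivative (T ℝ n)).eval c| := by
    intro c hc
    have hn : (n : ℝ) ≠ 0 := by
      intro h
      simp [Nat.cast_eq_zero.mp h] at hc
    have hTc := abs_eval_derivative_T_mul_sqrt_of_mem_roots hc
    have hsqrt : 0 < √(1 - c ^ 2) :=
      (sqrt_nonneg _).lt_of_ne' (right_ne_zero_of_mul (hTc.trans_ne hn))
    refine le_of_mul_le_mul_right ?_ hsqrt
    rw [mul_assoc, hTc, div_mul_cancel₀ M hn]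
    exact hqM c (abs_le.mp (abs_le_one_of_mem_roots_T_real hc))
  calc |q.eval x| ≤ M / n * (derivative (T ℝ n)).eval x := by
        refine abs_eval_le_mul_eval_derivative_of_splits (splits_T_real n) ?_ ?_ ?_ at_root
          fun c hc => (le_cos_of_mem_roots_T_real hc).trans hcos
        · rw [roots_T_real]
          exact Finset.nodup _
        · rw [leadingCoeff_T]
          positivity
        · simpa using hq
    _ ≤ M / n * n ^ 2 := by
        gcongr
        simpa using eval_derivative_T_le_sq n hx
    _ = n * M := by
        rcases eq_or_ne n 0 with rfl | hn
        · simp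
        · field_simp

theorem schur_inequality (hq : q.degree < n)
    (hqM : ∀ x ∈ Set.Icc (-1 : ℝ) 1, |q.eval x| * √(1 - x ^ 2) ≤ M)
    {x : ℝ} (hx : x ∈ Set.Icc (-1 : ℝ) 1) : |q.eval x| ≤ n * M := by
  rcases eq_or_ne n 0 with rfl | hn
  · have hq0 : q = 0 := by simpa using hq
    simp [hq0]
  rcases le_total |x| (cos (π / (2 * n))) with hmid | hend
  · calc |q.eval x| ≤ |q.eval x| * (n * √(1 - x ^ 2)) :=
          le_mul_of_one_le_right (abs_nonneg _) (one_le_mul_sqrt_one_sub_sq hn hmid)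
      _ = n * (|q.eval x| * √(1 - x ^ 2)) := by ring
      _ ≤ n * M := by gcongr; exact hqM x hx
  rcases le_abs.mp hend with hright | hleft
  · exact abs_eval_le_mul_of_cos_le hq hqM (abs_le.mpr hx) hright
  · have hreflect := abs_eval_le_mul_of_cos_le (q := q.comp (-X)) (M := M) (x := -x) (n := n)
      (by rw [degree_comp_neg_X]; exact hq) (fun y hy => by
        simpa using hqM (-y) ⟨neg_le_neg hy.2, neg_le.mp hy.1⟩)
      (by simpa using abs_le.mpr hx) hleft
    simpa using hreflect

end SchurInequality

section BernsteinInequality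

open Polynomial Polynomial.Chebyshev Real

variable {n : ℕ} {p : ℝ[X]}

lemma exists_eval_T_cos_add_sub_eval_T_cos_sub (j : ℕ) (θ : ℝ) :
    ∃ r : ℝ[X], r.degree < j ∧
      (∀ ψ, (T ℝ j).eval (cos (θ + ψ)) - (T ℝ j).eval (cos (θ - ψ)) =
        2 * (r.eval (cos ψ) * sin ψ)) ∧
      r.eval 1 = -((derivative (T ℝ j)).eval (cos θ) * sin θ) := by
  refine ⟨-sin (j * θ) • U ℝ (j - 1), (degree_smul_le _ _).trans_lt (degree_U_sub_one_lt j),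
    fun ψ => ?_, ?_⟩
  · rw [eval_T_cos_add_sub_eval_T_cos_sub, eval_smul, smul_eq_mul, mul_assoc (-sin _),
      eval_U_sub_one_cos_mul_sin, Int.cast_natCast]
    ring
  · rw [eval_derivative_T_cos_mul_sin, eval_smul, smul_eq_mul, U_eval_one]
    push_cast
    ring

lemma exists_eval_cos_add_sub_eval_cos_sub (hp : p.natDegree ≤ n) (θ : ℝ) :
    ∃ r : ℝ[X], r.degree < n ∧
      (∀ ψ, p.eval (cos (θ + ψ)) - p.eval (cos (θ - ψ)) = 2 * (r.eval (cos ψ) * sin ψ)) ∧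
      r.eval 1 = -((derivative p).eval (cos θ) * sin θ) := by
  have hmem : p ∈ degreeLT ℝ (n + 1) := by
    rw [mem_degreeLT]
    exact degree_le_natDegree.trans_lt (mod_cast Nat.lt_succ_of_le hp)
  rw [← Sequence.span_degreeLT (chebyshevTsequence ℝ) (by simp)] at hmem
  clear hp
  induction hmem using Submodule.span_induction with
  | mem _ hmem =>
    obtain ⟨j, hj, rfl⟩ := hmem
    obtain ⟨r, hdeg, hr⟩ := exists_eval_T_cos_add_sub_eval_T_cos_sub j θ
    exact ⟨r, hdeg.trans_le (mod_cast Nat.lt_succ_iff.mp hj), hr⟩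
  | zero => exact ⟨0, by simp, by simp, by simp⟩
  | add p₁ p₂ _ _ ih₁ ih₂ =>
    obtain ⟨r₁, hdeg₁, heq₁, hone₁⟩ := ih₁
    obtain ⟨r₂, hdeg₂, heq₂, hone₂⟩ := ih₂
    refine ⟨r₁ + r₂, (degree_add_le r₁ r₂).trans_lt (max_lt hdeg₁ hdeg₂), fun ψ => ?_, ?_⟩
    · simp only [eval_add]
      linear_combination heq₁ ψ + heq₂ ψ
    · simp only [eval_add, derivative_add]
      linear_combination hone₁ + hone₂
  | smul a p₁ _ ih =>
    obtain ⟨r₁, hdeg, heq, hone⟩ := ih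
    refine ⟨a • r₁, (degree_smul_le a r₁).trans_lt hdeg, fun ψ => ?_, ?_⟩
    · simp only [eval_smul, smul_eq_mul]
      linear_combination a * heq ψ
    · simp only [eval_smul, derivative_smul, smul_eq_mul]
      linear_combination a * hone

theorem bernstein_inequality (hp : p.natDegree ≤ n) {M : ℝ}
    (hpM : ∀ x ∈ Set.Icc (-1 : ℝ) 1, |p.eval x| ≤ M) {x : ℝ} (hx : x ∈ Set.Icc (-1 : ℝ) 1) :
    |(derivative p).eval x| * √(1 - x ^ 2) ≤ n * M := by
  obtain ⟨r, hdeg, hr, hr_one⟩ := exists_eval_cos_add_sub_eval_cos_sub hp (arccos x)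
  have hrM : ∀ y ∈ Set.Icc (-1 : ℝ) 1, |r.eval y| * √(1 - y ^ 2) ≤ M := by
    intro y hy
    have hdiff := hr (arccos y)
    rw [cos_arccos hy.1 hy.2, sin_arccos] at hdiff
    have hadd := abs_le.mp (hpM _ (cos_mem_Icc (arccos x + arccos y)))
    have hsub := abs_le.mp (hpM _ (cos_mem_Icc (arccos x - arccos y)))
    rw [← abs_of_nonneg (sqrt_nonneg (1 - y ^ 2)), ← abs_mul, abs_le]
    constructor <;> linarith
  calc |(derivative p).eval x| * √(1 - x ^ 2) = |r.eval 1| := by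
        rw [hr_one, abs_neg, cos_arccos hx.1 hx.2, sin_arccos, abs_mul,
          abs_of_nonneg (sqrt_nonneg _)]
    _ ≤ n * M := schur_inequality hdeg hrM (by simp)

end BernsteinInequality

/-- Markov's theorem: a polynomial of degree at most `d` bounded by `1` on `[-1,1]` has
derivative bounded by `d²` on `[-1,1]`. -/
theorem markov_brothers_inequality (d : ℕ) (p : Polynomial ℝ) (hp : p.natDegree ≤ d)
    (hbdd : ∀ x ∈ Set.Icc (-1 : ℝ) 1, |p.eval x| ≤ 1) :
    ∀ x ∈ Set.Icc (-1 : ℝ) 1, |p.derivative.eval x| ≤ (d : ℝ) ^ 2 := by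
  intro x hx
  have hdeg : p.derivative.degree < d := by
    rcases eq_or_ne p 0 with rfl | hp0
    · simp
    · exact (Polynomial.degree_derivative_lt hp0).trans_le
        (Polynomial.natDegree_le_iff_degree_le.mp hp)
  calc |p.derivative.eval x| ≤ d * (d * 1) :=
        schur_inequality hdeg (fun _ => bernstein_inequality hp hbdd) hx
    _ = (d : ℝ) ^ 2 := by ring
end

section
/- There exists a constant C > 0 such that for every positive integer d there exists a real polynomial p of degree at most d satisfying sup_{x ∈ [0,∞)} |e^{-x} - p(x)/(1 + x/d)^d| ≤ C·d·2^{-d}. -/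
/-!
Under the substitution `u = (1 + x / a)⁻¹`, which maps `[0, ∞)` onto `(0, 1]`, the function
`exp (-x)` becomes `exp (a - a / u)` and the fractions `p(x) / (1 + x / a) ^ d` become the
polynomials of degree at most `d` in `u`. We interpolate at the Chebyshev nodes of `[0, 1]`.
Cauchy's estimate on the disc centred at `u` with radius tending to `u` bounds the `n`-th
derivative of `exp (a - a / u)` by `n! * exp (a - n) * (2 * n / a) ^ n`. With `n = d + 1` and
`a = d` this is of order `n! * 2 ^ d`, while the interpolation error carries the factor
`2 * 4 ^ (-n) / n!` coming from the Chebyshev nodes, so the error is of order `2 ^ (-d)`.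
-/

open Polynomial Set Filter Topology

open scoped Nat

section Interpolation

theorem iteratedDeriv_polynomial_eval {𝕜 : Type*} [NontriviallyNormedField 𝕜] (p : 𝕜[X]) (n : ℕ) :
    iteratedDeriv n (fun x ↦ p.eval x) = fun x ↦ (derivative^[n] p).eval x := by
  induction n with
  | zero => simp
  | succ n ih =>
    ext x
    rw [iteratedDeriv_succ, ih, Polynomial.deriv, Function.iterate_succ_apply']

theorem iterate_derivative_eq_C_of_natDegree_le {R : Type*} [Semiring R] {p : R[X]} {n : ℕ}
    (hp : p.natDegree ≤ n) : derivative^[n] p = C ((n ! : R) * p.coeff n) := by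
  have hdeg : (derivative^[n] p).natDegree ≤ 0 :=
    (natDegree_iterate_derivative p n).trans (by omega)
  rw [eq_C_of_natDegree_le_zero hdeg, coeff_iterate_derivative, zero_add, Nat.descFactorial_self,
    nsmul_eq_mul]

variable {f : ℝ → ℝ} {s : Set ℝ}

theorem exists_finset_deriv_eq_zero (hs : s.OrdConnected) (hf : ContinuousOn f s) {n : ℕ}
    {Z : Finset ℝ} (hZ : Z.card = n + 1) (hZs : ↑Z ⊆ s) (hfZ : ∀ x ∈ Z, f x = 0) :
    ∃ W : Finset ℝ, W.card = n ∧ ↑W ⊆ s ∧ ∀ x ∈ W, deriv f x = 0 := by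
  set z := Z.orderEmbOfFin hZ
  have z_mem (i) : z i ∈ Z := Z.orderEmbOfFin_mem hZ i
  have Icc_subset (i j) : Icc (z i) (z j) ⊆ s := hs.out (hZs (z_mem i)) (hZs (z_mem j))
  have rolle (i : Fin n) : ∃ c ∈ Ioo (z i.castSucc) (z i.succ), deriv f c = 0 :=
    exists_deriv_eq_zero (z.strictMono Fin.castSucc_lt_succ) (hf.mono (Icc_subset _ _))
      (by rw [hfZ _ (z_mem _), hfZ _ (z_mem _)])
  choose c c_mem hc using rolle
  have c_strictMono : StrictMono c := fun i j hij ↦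
    calc c i < z i.succ := (c_mem i).2
      _ ≤ z j.castSucc := z.monotone (Fin.succ_le_castSucc_iff.2 hij)
      _ < c j := (c_mem j).1
  refine ⟨Finset.univ.map ⟨c, c_strictMono.injective⟩, by simp, ?_, by simpa using hc⟩
  simpa [range_subset_iff] using fun i ↦ Icc_subset _ _ (Ioo_subset_Icc_self (c_mem i))

theorem exists_iteratedDeriv_eq_zero (hs : s.OrdConnected) {n : ℕ}
    (hf : ∀ x ∈ s, ContDiffAt ℝ n f x) {Z : Finset ℝ} (hZ : Z.card = n + 1) (hZs : ↑Z ⊆ s)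
    (hfZ : ∀ x ∈ Z, f x = 0) : ∃ ξ ∈ s, iteratedDeriv n f ξ = 0 := by
  induction n generalizing f Z with
  | zero =>
    obtain ⟨ξ, hξ⟩ : Z.Nonempty := Finset.card_pos.1 (by omega)
    exact ⟨ξ, hZs hξ, by simpa using hfZ ξ hξ⟩
  | succ n ih =>
    obtain ⟨W, hW, hWs, hfW⟩ := exists_finset_deriv_eq_zero hs
      (fun x hx ↦ (hf x hx).continuousAt.continuousWithinAt) hZ hZs hfZ
    simpa only [iteratedDeriv_succ'] using
      ih (fun x hx ↦ (hf x hx).derivWithin (by norm_cast)) hW hWs hfW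

theorem exists_iteratedDeriv_eq_factorial_mul_coeff (hs : s.OrdConnected) {n : ℕ}
    (hf : ∀ x ∈ s, ContDiffAt ℝ n f x) {Z : Finset ℝ} (hZ : Z.card = n + 1) (hZs : ↑Z ⊆ s)
    {p : ℝ[X]} (hp : p.natDegree ≤ n) (hfp : ∀ x ∈ Z, f x = p.eval x) :
    ∃ ξ ∈ s, iteratedDeriv n f ξ = n ! * p.coeff n := by
  have p_contDiff (x : ℝ) : ContDiffAt ℝ n (fun x ↦ p.eval x) x := p.contDiff_aeval n |>.contDiffAt
  obtain ⟨ξ, hξs, hξ⟩ := exists_iteratedDeriv_eq_zero hs (f := f - fun x ↦ p.eval x)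
    (fun x hx ↦ (hf x hx).sub (p_contDiff x)) hZ hZs (fun x hx ↦ sub_eq_zero.2 (hfp x hx))
  refine ⟨ξ, hξs, ?_⟩
  simpa only [iteratedDeriv_sub (hf ξ hξs) (p_contDiff ξ), iteratedDeriv_polynomial_eval,
    iterate_derivative_eq_C_of_natDegree_le hp, eval_C, sub_eq_zero] using hξ

theorem exists_sub_eval_interpolate_eq {ι : Type*} [DecidableEq ι] (hs : s.OrdConnected)
    {t : Finset ι} {v : ι → ℝ} (hv : InjOn v t) (hvs : MapsTo v t s)
    (hf : ∀ y ∈ s, ContDiffAt ℝ t.card f y) {x : ℝ} (hx : x ∈ s) :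
    ∃ ξ ∈ s, f x - (Lagrange.interpolate t v (f ∘ v)).eval x =
      iteratedDeriv t.card f ξ / t.card ! * (Lagrange.nodal t v).eval x := by
  set q := Lagrange.interpolate t v (f ∘ v)
  set ω := Lagrange.nodal t v
  have f_eq_q {i : ι} (hi : i ∈ t) : f (v i) = q.eval (v i) :=
    (Lagrange.eval_interpolate_at_node (f ∘ v) hv hi).symm
  by_cases hxt : ∃ i ∈ t, x = v i
  · obtain ⟨i, hi, rfl⟩ := hxt
    exact ⟨v i, hx, by rw [← f_eq_q hi, Lagrange.eval_nodal_at_node hi, sub_self, mul_zero]⟩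
  push Not at hxt
  have hωx : ω.eval x ≠ 0 := Lagrange.eval_nodal_not_at_node hxt
  -- `c` is chosen so that `q + c * ω` interpolates `f` at `x` as well.
  set c := (f x - q.eval x) / ω.eval x
  have hq : q.degree < t.card := Lagrange.degree_interpolate_lt (f ∘ v) hv
  have hω : ω.natDegree = t.card := Lagrange.natDegree_nodal
  have hdeg : (q + C c * ω).natDegree ≤ t.card :=
    natDegree_add_le_of_degree_le (natDegree_le_of_degree_le hq.le)
      ((natDegree_C_mul_le c ω).trans hω.le)
  have hcoeff : (q + C c * ω).coeff t.card = c := by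
    have : ω.coeff t.card = 1 := hω ▸ Lagrange.nodal_monic.coeff_natDegree
    simp [coeff_eq_zero_of_degree_lt hq, this]
  obtain ⟨ξ, hξs, hξ⟩ := exists_iteratedDeriv_eq_factorial_mul_coeff hs hf
    (Z := insert x (t.image v))
    (by rw [Finset.card_insert_of_notMem (by simpa [eq_comm] using hxt),
      Finset.card_image_of_injOn hv])
    (by simpa [insert_subset_iff, hx, mapsTo_iff_subset_preimage] using hvs) hdeg (by
      simp only [Finset.forall_mem_insert, Finset.forall_mem_image, eval_add, eval_mul, eval_C]
      refine ⟨by simp [c, hωx], fun i hi ↦ ?_⟩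
      rw [f_eq_q hi, Lagrange.eval_nodal_at_node hi, mul_zero, add_zero])
  refine ⟨ξ, hξs, ?_⟩
  rw [hξ, hcoeff, mul_div_cancel_left₀ _ (by positivity), div_mul_cancel₀ _ hωx]

end Interpolation

section ChebyshevNodes

open Polynomial.Chebyshev

theorem abs_lt_one_of_mem_roots_T {n : ℤ} {y : ℝ} (hy : y ∈ (T ℝ n).roots) : |y| < 1 := by
  by_contra! h
  have := one_le_abs_eval_T_real n h
  rw [(isRoot_of_mem_roots hy).eq_zero, abs_zero] at this
  linarith

theorem roots_T_nodup (n : ℕ) : (T ℝ n).roots.Nodup := by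
  rw [roots_T_real]
  exact Finset.nodup _

theorem card_roots_T (n : ℕ) : (T ℝ n).roots.card = n := by
  rw [roots_T_real, Finset.card_val, Finset.card_image_of_injOn, Finset.card_range]
  exact (Finset.range n).nodup_map_iff_injOn.1 (roots_T_real_nodup n)

theorem card_toFinset_roots_T (n : ℕ) : (T ℝ n).roots.toFinset.card = n := by
  rw [Multiset.toFinset_card_of_nodup (roots_T_nodup n), card_roots_T]

theorem eval_T_eq_prod_roots (n : ℕ) (w : ℝ) :
    (T ℝ n).eval w = 2 ^ (n - 1) * ∏ y ∈ (T ℝ n).roots.toFinset, (w - y) := by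
  have hcard : (T ℝ n).roots.card = (T ℝ n).natDegree := by
    rw [card_roots_T, natDegree_T, Int.natAbs_natCast]
  conv_lhs => rw [← C_leadingCoeff_mul_prod_multiset_X_sub_C hcard]
  rw [leadingCoeff_T, Int.natAbs_natCast, eval_mul, eval_C, eval_multiset_prod, Multiset.map_map,
    Finset.prod, Multiset.toFinset_val, (roots_T_nodup n).dedup]
  simp

theorem eval_nodal_roots_T (n : ℕ) (c r w : ℝ) :
    (Lagrange.nodal (T ℝ (n + 1 : ℕ)).roots.toFinset (fun y ↦ c + r * y)).eval (c + r * w) =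
      2 * (r / 2) ^ (n + 1) * (T ℝ (n + 1 : ℕ)).eval w := by
  have factor (y : ℝ) : c + r * w - (c + r * y) = r * (w - y) := by ring
  simp only [Lagrange.eval_nodal, factor, Finset.prod_mul_distrib, Finset.prod_const,
    card_toFinset_roots_T, eval_T_eq_prod_roots, Nat.add_sub_cancel]
  rw [div_pow, pow_succ 2]
  field_simp

theorem exists_natDegree_le_abs_sub_eval_le {f : ℝ → ℝ} {s : Set ℝ} (hs : s.OrdConnected)
    {a b M : ℝ} (hab : a < b) (habs : Ioo a b ⊆ s) {n : ℕ}
    (hf : ∀ y ∈ s, ContDiffAt ℝ (n + 1 : ℕ) f y)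
    (hM : ∀ y ∈ s, |iteratedDeriv (n + 1) f y| ≤ M) :
    ∃ q : ℝ[X], q.natDegree ≤ n ∧
      ∀ x ∈ s ∩ Icc a b, |f x - q.eval x| ≤ M / (n + 1)! * (2 * ((b - a) / 4) ^ (n + 1)) := by
  obtain ⟨c, r, hr, rfl, rfl⟩ : ∃ c r, 0 < r ∧ a = c - r ∧ b = c + r :=
    ⟨(a + b) / 2, (b - a) / 2, by linarith, by ring, by ring⟩
  set t := (T ℝ (n + 1 : ℕ)).roots.toFinset
  set v : ℝ → ℝ := fun y ↦ c + r * y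
  have ht : t.card = n + 1 := card_toFinset_roots_T _
  have hv : InjOn v t := fun y _ z _ h ↦ mul_left_cancel₀ hr.ne' (add_left_cancel h)
  have hvs : MapsTo v t s := fun y hy ↦ habs <| by
    obtain ⟨h₁, h₂⟩ := abs_lt.1 (abs_lt_one_of_mem_roots_T (Multiset.mem_toFinset.1 hy))
    constructor <;> simp only [v] <;> nlinarith
  refine ⟨Lagrange.interpolate t v (f ∘ v), ?_, fun x hx ↦ ?_⟩
  · have := Lagrange.degree_interpolate_lt (f ∘ v) hv
    rw [ht] at this
    exact natDegree_le_of_degree_le (Order.le_of_lt_succ this)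
  obtain ⟨w, rfl⟩ : ∃ w, x = c + r * w := ⟨(x - c) / r, by field_simp; ring⟩
  have hw : |w| ≤ 1 := by
    obtain ⟨-, h₁, h₂⟩ := hx
    rw [abs_le]
    constructor <;> nlinarith
  obtain ⟨ξ, hξs, hξ⟩ := exists_sub_eval_interpolate_eq hs hv hvs (by rwa [ht]) hx.1
  rw [hξ, ht, eval_nodal_roots_T, abs_mul, abs_div, Nat.abs_cast, abs_mul,
    show (c + r - (c - r)) / 4 = r / 2 by ring,
    abs_of_pos (by positivity : 0 < 2 * (r / 2) ^ (n + 1))]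
  have hT := abs_eval_T_real_le_one (n + 1 : ℕ) hw
  have := hM ξ hξs
  have hM0 := (abs_nonneg _).trans this
  gcongr ?_ / _ * ?_
  exact mul_le_of_le_one_right (by positivity) hT

end ChebyshevNodes

section ExpSubDiv

open Metric

theorem iteratedDeriv_re_comp_ofReal {F : ℂ → ℂ} {x : ℝ} (hF : AnalyticAt ℂ F x) (n : ℕ) :
    iteratedDeriv n (fun t : ℝ ↦ (F t).re) x = (iteratedDeriv n F x).re := by
  induction n generalizing x with
  | zero => simp
  | succ n ih =>
    have ih_near : iteratedDeriv n (fun t : ℝ ↦ (F t).re) =ᶠ[𝓝 x]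
        fun t ↦ (iteratedDeriv n F t).re :=
      (Complex.continuous_ofReal.continuousAt.eventually hF.eventually_analyticAt).mono fun _ ↦ ih
    have hdiff : DifferentiableAt ℂ (iteratedDeriv n F) x := by
      rw [iteratedDeriv_eq_iterate]
      exact (hF.iterated_deriv n).differentiableAt
    rw [iteratedDeriv_succ, iteratedDeriv_succ, ih_near.deriv_eq]
    exact hdiff.hasDerivAt.real_of_complex.deriv

theorem inv_add_le_re_inv {c r : ℝ} (hr : 0 ≤ r) (hrc : r < c) {z : ℂ}
    (hz : z ∈ closedBall (c : ℂ) r) : (c + r)⁻¹ ≤ (z⁻¹).re := by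
  have hdist : (z.re - c) ^ 2 + z.im ^ 2 ≤ r ^ 2 := by
    rw [mem_closedBall_iff_norm, ← sq_le_sq₀ (norm_nonneg _) hr, Complex.sq_norm,
      Complex.normSq_apply] at hz
    simpa [sq] using hz
  have hre : |z.re - c| ≤ r := abs_le_of_sq_le_sq (by nlinarith [sq_nonneg z.im]) hr
  obtain ⟨hre₁, hre₂⟩ := abs_le.1 hre
  have hz0 : 0 < Complex.normSq z := Complex.normSq_pos.2 fun h ↦ by
    simp only [h, Complex.zero_re] at hre₁
    linarith
  rw [Complex.inv_re, inv_eq_one_div, div_le_div_iff₀ (by linarith) hz0, Complex.normSq_apply]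
  nlinarith [mul_nonneg (sub_nonneg.2 hrc.le) (sub_nonneg.2 hre₂)]

variable {a ξ : ℝ}

theorem norm_iteratedDeriv_cexp_sub_div_le_of_lt (ha : 0 ≤ a) {r : ℝ} (hr : 0 < r) (hrξ : r < ξ)
    (n : ℕ) :
    ‖iteratedDeriv n (fun z : ℂ ↦ Complex.exp (a - a / z)) ξ‖ ≤
      n ! * Real.exp (a - a / (ξ + r)) / r ^ n := by
  refine Complex.norm_iteratedDeriv_le_of_forall_mem_sphere_norm_le n hr ?_ fun z hz ↦ ?_
  · refine DifferentiableOn.diffContOnCl fun z hz ↦ ?_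
    rw [closure_ball _ hr.ne'] at hz
    have hz0 : z ≠ 0 := by
      rintro rfl
      have := inv_add_le_re_inv hr.le hrξ hz
      rw [inv_zero, Complex.zero_re, inv_nonpos] at this
      linarith
    exact DifferentiableAt.differentiableWithinAt (by fun_prop (disch := assumption))
  · have hre : ((a : ℂ) - a / z).re = a - a * (z⁻¹).re := by
      rw [div_eq_mul_inv, Complex.sub_re, Complex.re_ofReal_mul, Complex.ofReal_re]
    rw [Complex.norm_exp, hre, div_eq_mul_inv]
    gcongr
    exact inv_add_le_re_inv hr.le hrξ (sphere_subset_closedBall hz)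

theorem norm_iteratedDeriv_cexp_sub_div_le (ha : 0 ≤ a) (hξ : 0 < ξ) (n : ℕ) :
    ‖iteratedDeriv n (fun z : ℂ ↦ Complex.exp (a - a / z)) ξ‖ ≤
      n ! * Real.exp (a - a / (2 * ξ)) / ξ ^ n := by
  have hlim : Tendsto (fun r ↦ n ! * Real.exp (a - a / (ξ + r)) / r ^ n) (𝓝[<] ξ)
      (𝓝 (n ! * Real.exp (a - a / (2 * ξ)) / ξ ^ n)) := by
    rw [two_mul]
    have : ContinuousAt (fun r ↦ n ! * Real.exp (a - a / (ξ + r)) / r ^ n) ξ := by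
      fun_prop (disch := positivity)
    exact this.continuousWithinAt
  refine ge_of_tendsto hlim ?_
  filter_upwards [Ioo_mem_nhdsLT hξ] with r hr
  exact norm_iteratedDeriv_cexp_sub_div_le_of_lt ha hr.1 hr.2 n

theorem pow_mul_exp_neg_le {y : ℝ} (hy : 0 ≤ y) (n : ℕ) :
    y ^ n * Real.exp (-y) ≤ n ^ n * Real.exp (-n) := by
  rcases eq_or_ne n 0 with rfl | hn
  · simpa using hy
  have hle : y / n ≤ Real.exp (y / n - 1) := by
    simpa using Real.add_one_le_exp (y / n - 1)
  have hpow : (y / n) ^ n ≤ Real.exp (y - n) := by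
    calc (y / n) ^ n ≤ Real.exp (y / n - 1) ^ n := by gcongr
      _ = Real.exp (y - n) := by
        rw [← Real.exp_nat_mul]
        congr 1
        field_simp
  rw [div_pow, div_le_iff₀ (by positivity)] at hpow
  calc y ^ n * Real.exp (-y) ≤ Real.exp (y - n) * n ^ n * Real.exp (-y) := by gcongr
    _ = n ^ n * (Real.exp (y - n) * Real.exp (-y)) := by ring
    _ = n ^ n * Real.exp (-n) := by
      rw [← Real.exp_add]
      ring_nf

theorem abs_iteratedDeriv_exp_sub_div_le (ha : 0 < a) (hξ : 0 < ξ) (n : ℕ) :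
    |iteratedDeriv n (fun t ↦ Real.exp (a - a / t)) ξ| ≤
      n ! * (Real.exp (a - n) * (2 * n / a) ^ n) := by
  have hF : AnalyticAt ℂ (fun z : ℂ ↦ Complex.exp (a - a / z)) ξ := by
    have : (ξ : ℂ) ≠ 0 := mod_cast hξ.ne'
    fun_prop (disch := assumption)
  have hre : (fun t : ℝ ↦ Real.exp (a - a / t)) =
      fun t : ℝ ↦ (Complex.exp ((a : ℂ) - a / (t : ℂ))).re := by
    ext t
    rw [← Complex.exp_ofReal_re]
    push_cast
    rfl
  set y := a / (2 * ξ)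
  have hy : ξ⁻¹ = 2 / a * y := by
    simp only [y]
    field_simp
  rw [hre, iteratedDeriv_re_comp_ofReal hF]
  calc |(iteratedDeriv n (fun z : ℂ ↦ Complex.exp (a - a / z)) ξ).re|
      ≤ n ! * Real.exp (a - y) / ξ ^ n :=
        (Complex.abs_re_le_norm _).trans (norm_iteratedDeriv_cexp_sub_div_le ha.le hξ n)
    _ = n ! * (Real.exp a * (2 / a) ^ n * (y ^ n * Real.exp (-y))) := by
      rw [div_eq_mul_inv, ← inv_pow, hy, mul_pow, sub_eq_add_neg, Real.exp_add]
      ring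
    _ ≤ n ! * (Real.exp a * (2 / a) ^ n * (n ^ n * Real.exp (-n))) := by
      gcongr _ * (_ * ?_)
      exact pow_mul_exp_neg_le (by positivity) n
    _ = n ! * (Real.exp (a - n) * (2 * n / a) ^ n) := by
      rw [sub_eq_add_neg, Real.exp_add, mul_div_right_comm, mul_pow]
      ring

end ExpSubDiv

section RationalApproximation

theorem eval_reflect_div_pow {K : Type*} [Field K] {q : K[X]} {d : ℕ} (hq : q.natDegree ≤ d) {y : K}
    (hy : y ≠ 0) : (q.reflect d).eval y / y ^ d = q.eval y⁻¹ := by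
  let := invertibleOfNonzero (inv_ne_zero hy)
  have := eval₂_reflect_mul_pow (RingHom.id K) y⁻¹ d q hq
  rwa [invOf_eq_inv, inv_inv, inv_pow, ← div_eq_mul_inv] at this

theorem exists_abs_exp_neg_sub_eval_div_pow_le {a : ℝ} (ha : 0 < a) (d : ℕ) :
    ∃ p : ℝ[X], p.natDegree ≤ d ∧ ∀ x : ℝ, 0 ≤ x →
      |Real.exp (-x) - p.eval x / (1 + x / a) ^ d| ≤
        2 * (Real.exp (a - (d + 1)) * ((d + 1) / (2 * a)) ^ (d + 1)) := by
  obtain ⟨q, hqd, hq⟩ := exists_natDegree_le_abs_sub_eval_le (f := fun t ↦ Real.exp (a - a / t))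
    (n := d) ordConnected_Ioi zero_lt_one Ioo_subset_Ioi_self
    (fun y (hy : 0 < y) ↦ by
      have := hy.ne'
      fun_prop (disch := assumption))
    (fun y hy ↦ abs_iteratedDeriv_exp_sub_div_le ha hy (d + 1))
  refine ⟨(q.reflect d).comp (1 + C a⁻¹ * X), ?_, fun x hx ↦ ?_⟩
  · have hlin : (1 + C a⁻¹ * X : ℝ[X]).natDegree ≤ 1 := by compute_degree
    calc _ ≤ (q.reflect d).natDegree * _ := natDegree_comp_le
      _ ≤ d * 1 := Nat.mul_le_mul (natDegree_reflect_le.trans (max_le le_rfl hqd)) hlin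
      _ = d := mul_one d
  set u := (1 + x / a)⁻¹
  have hu0 : 0 < u := by positivity
  have hu : u ∈ Ioi 0 ∩ Icc 0 1 :=
    ⟨hu0, hu0.le, inv_le_one_of_one_le₀ (le_add_of_nonneg_right (by positivity))⟩
  have hexp : a - a / u = -x := by
    simp only [u]
    field_simp
    ring
  have heval : ((q.reflect d).comp (1 + C a⁻¹ * X)).eval x / (1 + x / a) ^ d = q.eval u := by
    rw [← eval_reflect_div_pow hqd (by positivity), eval_comp]
    simp [div_eq_inv_mul]
  rw [heval, ← hexp]
  refine (hq u hu).trans_eq ?_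
  push_cast
  rw [mul_div_cancel_left₀ _ (by positivity), mul_left_comm, mul_assoc, ← mul_pow]
  ring_nf

theorem exp_rational_approx_negative_poles_general {d : ℕ} (hd : 0 < d) :
    ∃ p : ℝ[X], p.natDegree ≤ d ∧ ∀ x : ℝ, 0 ≤ x →
      |Real.exp (-x) - p.eval x / (1 + x / d) ^ d| ≤ 2 * (2 : ℝ) ^ (-(d : ℤ)) := by
  have hd0 : (0 : ℝ) < d := mod_cast hd
  obtain ⟨p, hp, happrox⟩ := exists_abs_exp_neg_sub_eval_div_pow_le hd0 d
  refine ⟨p, hp, fun x hx ↦ (happrox x hx).trans ?_⟩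
  have hinv : (d : ℝ)⁻¹ ≤ 1 := inv_le_one_of_one_le₀ (mod_cast hd)
  calc 2 * (Real.exp (d - (d + 1)) * (((d : ℝ) + 1) / (2 * d)) ^ (d + 1))
      = Real.exp (-1) * ((1 + (d : ℝ)⁻¹) ^ d * (1 + (d : ℝ)⁻¹)) * (2 ^ d)⁻¹ := by
        have : ((d : ℝ) + 1) / (2 * d) = (1 + (d : ℝ)⁻¹) / 2 := by field_simp
        rw [this, div_pow, pow_succ, pow_succ]
        ring_nf
    _ ≤ Real.exp (-1) * (Real.exp 1 * 2) * (2 ^ d)⁻¹ := by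
        gcongr
        · exact Real.one_add_inv_pow_le_exp
        · linarith
    _ = 2 * 2 ^ (-(d : ℤ)) := by
        rw [← mul_assoc, ← Real.exp_add, neg_add_cancel, Real.exp_zero, one_mul, zpow_neg,
          zpow_natCast]

end RationalApproximation

/-- Saff–Schönhage–Varga: for every `d` there is a polynomial `p` of degree at most `d` such
that the rational function `p(x)/(1+x/d)^d` (with all poles at `-d`) approximates `e^{-x}` on
`[0, ∞)` up to `O(d·2^{-d})`. -/
theorem exp_rational_approx_negative_poles :
    ∃ C : ℝ, 0 < C ∧ ∀ d : ℕ, 0 < d →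
      ∃ p : Polynomial ℝ, p.natDegree ≤ d ∧
        ∀ x : ℝ, 0 ≤ x →
          |Real.exp (-x) - p.eval x / (1 + x / d) ^ d| ≤ C * d * (2 : ℝ) ^ (-(d : ℤ)) := by
  refine ⟨2, two_pos, fun d hd ↦ ?_⟩
  obtain ⟨p, hp, happrox⟩ := exp_rational_approx_negative_poles_general hd
  refine ⟨p, hp, fun x hx ↦ (happrox x hx).trans ?_⟩
  have hd1 : (1 : ℝ) ≤ d := mod_cast hd
  gcongr
  linarith
end

section
/- There exists an absolute constant C > 0 such that for all ε, δ ∈ (0,1] there exist a positive integer N with N ≤ C·(1 + log(1/(εδ)))^C, positive reals w_1, ..., w_N, and positive reals t_1, ..., t_N with t_j ≤ (C/(εδ))^C for all j, such that for every x ∈ [ε, 1]: (1-δ)·x^{-1} ≤ Σ_{j=1}^{N} w_j·e^{-t_j·x} ≤ (1+δ)·x^{-1}. -/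
/-!
Write `x⁻¹ = ∫₀^∞ exp (-t * x) dt` and keep only the dyadic blocks `[a * 2 ^ j, a * 2 ^ (j + 1)]`
with `j < K`; what is lost has relative size at most `a * x + 1 / (2 ^ K * a * x)`. On each block
use the same rescaled quadrature rule with positive weights, exact on polynomials of degree `< n`
and with at most `n + 1` nodes; it exists because a vector of moments lies in the convex hull of the
moment curve. Expanding the exponential at the right end of the block, where all Taylor coefficients
are nonnegative, bounds the relative error on a block by `(2 / 3) ^ n * (y * exp (-y / 2))` with
`y = a * 2 ^ j * x`. These errors sum to `O((2 / 3) ^ n)` over all blocks, so `K` and `n`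
logarithmic in `1 / (ε * δ)` suffice. The dependence on `ε` and `δ` being this weak, both may be
replaced by the smaller number `p = ε * δ`.
-/

open MeasureTheory Module

section Tchakaloff

variable {E : Type*} [AddCommGroup E] [Module ℝ E] [FiniteDimensional ℝ E]

theorem exists_fin_pos_sum_smul_eq_of_mem_convexHull {s : Set E} {x : E}
    (hx : x ∈ convexHull ℝ s) :
    ∃ m ≤ finrank ℝ E + 1, ∃ (w : Fin m → ℝ) (z : Fin m → E),
      (∀ i, 0 < w i) ∧ ∑ i, w i = 1 ∧ (∀ i, z i ∈ s) ∧ ∑ i, w i • z i = x := by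
  obtain ⟨ι, _, z, w, hz, hind, hw, hw1, hwz⟩ := eq_pos_convex_span_of_mem_convexHull hx
  have hcard : Fintype.card ι ≤ finrank ℝ E + 1 :=
    hind.card_le_finrank_succ.trans (Nat.succ_le_succ (Submodule.finrank_le _))
  let e := (Fintype.equivFin ι).symm
  refine ⟨Fintype.card ι, hcard, w ∘ e, z ∘ e, fun i ↦ hw _, ?_, fun i ↦ hz ⟨_, rfl⟩, ?_⟩
  · exact (Equiv.sum_comp e w).trans hw1
  · exact (Equiv.sum_comp e fun i ↦ w i • z i).trans hwz

theorem isCompact_convexHull_of_finiteDimensional [TopologicalSpace E] [ContinuousAdd E]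
    [ContinuousSMul ℝ E] {s : Set E} (hs : IsCompact s) : IsCompact (convexHull ℝ s) := by
  let combination (m : ℕ) (p : (Fin m → ℝ) × (Fin m → E)) : E := ∑ i, p.1 i • p.2 i
  let combinations (m : ℕ) : Set E :=
    combination m '' (stdSimplex ℝ (Fin m) ×ˢ Set.univ.pi fun _ ↦ s)
  have hcompact (m : ℕ) : IsCompact (combinations m) :=
    ((isCompact_stdSimplex ℝ (Fin m)).prod (isCompact_univ_pi fun _ ↦ hs)).image
      (by fun_prop)
  have hunion : convexHull ℝ s = ⋃ m ∈ Set.Iic (finrank ℝ E + 1), combinations m := by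
    refine Set.Subset.antisymm (fun x hx ↦ ?_) (Set.iUnion₂_subset fun m _ ↦ ?_)
    · obtain ⟨m, hm, w, z, hw, hw1, hz, rfl⟩ := exists_fin_pos_sum_smul_eq_of_mem_convexHull hx
      exact Set.mem_biUnion hm ⟨(w, z), ⟨⟨fun i ↦ (hw i).le, hw1⟩, fun i _ ↦ hz i⟩, rfl⟩
    · rintro _ ⟨⟨w, z⟩, ⟨⟨hw, hw1⟩, hz⟩, rfl⟩
      exact (convex_convexHull ℝ s).sum_mem (fun i _ ↦ hw i) hw1
        fun i _ ↦ subset_convexHull ℝ s (hz i trivial)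
  rw [hunion]
  exact (Set.finite_Iic _).isCompact_biUnion fun m _ ↦ hcompact m

end Tchakaloff

theorem exists_fin_pos_sum_smul_eq_integral {X E : Type*} [TopologicalSpace X] [MeasurableSpace X]
    [NormedAddCommGroup E] [NormedSpace ℝ E] [FiniteDimensional ℝ E] {μ : Measure X}
    [IsProbabilityMeasure μ] {K : Set X} (hK : IsCompact K) (hμK : ∀ᵐ x ∂μ, x ∈ K) {g : X → E}
    (hg : ContinuousOn g K) (hgμ : Integrable g μ) :
    ∃ m ≤ finrank ℝ E + 1, ∃ (w : Fin m → ℝ) (z : Fin m → X),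
      (∀ i, 0 < w i) ∧ ∑ i, w i = 1 ∧ (∀ i, z i ∈ K) ∧ ∑ i, w i • g (z i) = ∫ x, g x ∂μ := by
  have hmem : ∫ x, g x ∂μ ∈ convexHull ℝ (g '' K) := by
    refine (convex_convexHull ℝ _).integral_mem
      (isCompact_convexHull_of_finiteDimensional (hK.image_of_continuousOn hg)).isClosed ?_ hgμ
    filter_upwards [hμK] with x hx using subset_convexHull ℝ _ (Set.mem_image_of_mem g hx)
  obtain ⟨m, hm, w, p, hw, hw1, hp, hwp⟩ := exists_fin_pos_sum_smul_eq_of_mem_convexHull hmem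
  choose z hz hzp using hp
  exact ⟨m, hm, w, z, hw, hw1, hz, by simpa only [hzp] using hwp⟩

/-- The Taylor remainder of the exponential at `0` after the `n` terms of degree less than `n`,
which controls the error of a quadrature rule that is exact on these terms. -/
noncomputable def expRemainder (n : ℕ) (z : ℝ) : ℝ :=
  Real.exp z - ∑ k ∈ Finset.range n, z ^ k / k.factorial

section ExpRemainder

variable (n : ℕ) {z θ : ℝ}

theorem hasSum_expRemainder (z : ℝ) :
    HasSum (fun k ↦ z ^ (k + n) / (k + n).factorial) (expRemainder n z) :=
  (hasSum_nat_add_iff' n).mpr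
    (Real.exp_eq_exp_ℝ ▸ NormedSpace.expSeries_div_hasSum_exp z)

theorem expRemainder_nonneg (hz : 0 ≤ z) : 0 ≤ expRemainder n z :=
  sub_nonneg.mpr (Real.sum_le_exp_of_nonneg hz n)

theorem expRemainder_le_exp (hz : 0 ≤ z) : expRemainder n z ≤ Real.exp z :=
  sub_le_self _ (Finset.sum_nonneg fun _ _ ↦ by positivity)

theorem expRemainder_succ_le_mul (hz : 0 ≤ z) :
    expRemainder (n + 1) z ≤ z * expRemainder n z := by
  refine hasSum_le (fun k ↦ ?_) (hasSum_expRemainder (n + 1) z)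
    ((hasSum_expRemainder n z).mul_left z)
  rw [← mul_div_assoc, ← pow_succ', ← add_assoc]
  gcongr _ / (?_ : ℝ)
  exact_mod_cast Nat.factorial_le (Nat.le_succ _)

theorem pow_mul_expRemainder_le (hz : 0 ≤ z) (hθ : 1 ≤ θ) :
    θ ^ n * expRemainder n z ≤ expRemainder n (θ * z) := by
  refine hasSum_le (fun k ↦ ?_) ((hasSum_expRemainder n z).mul_left (θ ^ n))
    (hasSum_expRemainder n (θ * z))
  rw [← mul_div_assoc, mul_pow]
  gcongr
  exact Nat.le_add_left n k

theorem expRemainder_le_exp_mul_div_pow (hz : 0 ≤ z) (hθ : 1 ≤ θ) :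
    expRemainder n z ≤ Real.exp (θ * z) / θ ^ n := by
  have : 0 < θ := one_pos.trans_le hθ
  rw [le_div_iff₀' (by positivity)]
  exact (pow_mul_expRemainder_le n hz hθ).trans (expRemainder_le_exp n (by positivity))

end ExpRemainder

theorem mul_exp_neg_two_mul_le (y : ℝ) :
    y * Real.exp (-(2 * y)) ≤ Real.exp (-y) - Real.exp (-(2 * y)) := by
  have hsplit : Real.exp (-y) = Real.exp y * Real.exp (-(2 * y)) := by
    rw [← Real.exp_add]
    ring_nf
  rw [hsplit, ← sub_one_mul]
  gcongr
  linarith [Real.add_one_le_exp y]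

/-- `w` and `u` are the weights and nodes of a quadrature rule on `[0, 1]` with positive weights
that integrates polynomials of degree less than `n` exactly. Exactness is stated on monomials, where
`∫ x in 0..1, x ^ k = 1 / (k + 1)`; the weights have sum one also when `n = 0`. -/
structure IsPosQuadrature {ι : Type*} [Fintype ι] (n : ℕ) (w u : ι → ℝ) : Prop where
  weight_pos : ∀ i, 0 < w i
  sum_weight : ∑ i, w i = 1
  node_mem : ∀ i, u i ∈ Set.Icc (0 : ℝ) 1
  sum_mul_pow : ∀ k < n, ∑ i, w i * u i ^ k = 1 / (k + 1)

theorem exists_isPosQuadrature (n : ℕ) :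
    ∃ m ≤ n + 1, ∃ w u : Fin m → ℝ, IsPosQuadrature n w u := by
  let moments (x : ℝ) (k : Fin n) : ℝ := x ^ (k : ℕ)
  let μ : Measure ℝ := volume.restrict (Set.Ioc 0 1)
  have : IsProbabilityMeasure μ := ⟨by simp [μ]⟩
  have hcont : Continuous moments := by fun_prop
  have hint : Integrable moments μ :=
    hcont.integrableOn_Icc.mono_set Set.Ioc_subset_Icc_self
  have hsupp : ∀ᵐ x ∂μ, x ∈ Set.Icc (0 : ℝ) 1 :=
    (ae_restrict_mem measurableSet_Ioc).mono fun _ hx ↦ Set.Ioc_subset_Icc_self hx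
  obtain ⟨m, hm, w, u, hw, hw1, hu, hwu⟩ :=
    exists_fin_pos_sum_smul_eq_integral isCompact_Icc hsupp hcont.continuousOn hint
  refine ⟨m, by simpa using hm, w, u, hw, hw1, hu, fun k hk ↦ ?_⟩
  calc ∑ i, w i * u i ^ k = (∑ i, w i • moments (u i)) ⟨k, hk⟩ := by simp [moments]
    _ = ∫ x in (0 : ℝ)..1, x ^ k := by
      rw [hwu, eval_integral fun i ↦ hint.eval i, intervalIntegral.integral_of_le zero_le_one]
    _ = 1 / (k + 1) := by simp [integral_pow]

namespace IsPosQuadrature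

variable {ι : Type*} [Fintype ι] {n : ℕ} {w u : ι → ℝ}

theorem mul_sum_taylor (h : IsPosQuadrature n w u) (y : ℝ) :
    y * ∑ i, w i * ∑ k ∈ Finset.range n, (u i * y) ^ k / k.factorial =
      ∑ k ∈ Finset.range n, y ^ (k + 1) / (k + 1).factorial := by
  simp only [Finset.mul_sum]
  rw [Finset.sum_comm]
  refine Finset.sum_congr rfl fun k hk ↦ ?_
  calc ∑ i, y * (w i * ((u i * y) ^ k / k.factorial))
      = y ^ (k + 1) / k.factorial * ∑ i, w i * u i ^ k := by
        rw [Finset.mul_sum]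
        exact Finset.sum_congr rfl fun i _ ↦ by ring
    _ = y ^ (k + 1) / (k + 1).factorial := by
        rw [h.sum_mul_pow k (Finset.mem_range.mp hk), Nat.factorial_succ]
        push_cast
        field_simp

theorem mul_sum_exp_sub (h : IsPosQuadrature n w u) (y : ℝ) :
    y * ∑ i, w i * Real.exp (u i * y) - (Real.exp y - 1) =
      y * ∑ i, w i * expRemainder n (u i * y) - expRemainder (n + 1) y := by
  simp only [expRemainder, mul_sub, Finset.sum_sub_distrib]
  rw [h.mul_sum_taylor, Finset.sum_range_succ', pow_zero, Nat.factorial_zero, Nat.cast_one]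
  ring

theorem abs_mul_sum_exp_sub_le (h : IsPosQuadrature n w u) {y θ : ℝ} (hy : 0 ≤ y) (hθ : 1 ≤ θ) :
    |y * ∑ i, w i * Real.exp (u i * y) - (Real.exp y - 1)| ≤
      y * (Real.exp (θ * y) / θ ^ n) := by
  have hnode (i : ι) : 0 ≤ u i * y := mul_nonneg (h.node_mem i).1 hy
  have hrem (i : ι) : expRemainder n (u i * y) ≤ Real.exp (θ * y) / θ ^ n := by
    refine (expRemainder_le_exp_mul_div_pow n (hnode i) hθ).trans ?_
    gcongr
    exact mul_le_of_le_one_left hy (h.node_mem i).2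
  have hsum : ∑ i, w i * expRemainder n (u i * y) ≤ Real.exp (θ * y) / θ ^ n :=
    calc ∑ i, w i * expRemainder n (u i * y) ≤ ∑ i, w i * (Real.exp (θ * y) / θ ^ n) :=
          Finset.sum_le_sum fun i _ ↦ mul_le_mul_of_nonneg_left (hrem i) (h.weight_pos i).le
      _ = Real.exp (θ * y) / θ ^ n := by rw [← Finset.sum_mul, h.sum_weight, one_mul]
  have hsum_nonneg : 0 ≤ ∑ i, w i * expRemainder n (u i * y) :=
    Finset.sum_nonneg fun i _ ↦ mul_nonneg (h.weight_pos i).le (expRemainder_nonneg n (hnode i))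
  rw [h.mul_sum_exp_sub]
  refine abs_sub_le_of_nonneg_of_le (mul_nonneg hy hsum_nonneg)
    (mul_le_mul_of_nonneg_left hsum hy) (expRemainder_nonneg _ hy) ?_
  exact (expRemainder_succ_le_mul n hy).trans
    (mul_le_mul_of_nonneg_left (expRemainder_le_exp_mul_div_pow n hy hθ) hy)

theorem abs_mul_sum_exp_neg_sub_le (h : IsPosQuadrature n w u) {y : ℝ} (hy : 0 ≤ y) :
    |y * ∑ i, w i * Real.exp (-((2 - u i) * y)) - (Real.exp (-y) - Real.exp (-(2 * y)))| ≤
      4 * (2 / 3) ^ n * (Real.exp (-(y / 4)) - Real.exp (-(2 * (y / 4)))) := by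
  have hnode (i : ι) :
      Real.exp (-((2 - u i) * y)) = Real.exp (-(2 * y)) * Real.exp (u i * y) := by
    rw [← Real.exp_add]
    ring_nf
  have hblock : Real.exp (-y) = Real.exp (-(2 * y)) * Real.exp y := by
    rw [← Real.exp_add]
    ring_nf
  have hfactor : y * ∑ i, w i * Real.exp (-((2 - u i) * y)) -
      (Real.exp (-y) - Real.exp (-(2 * y))) =
        Real.exp (-(2 * y)) * (y * ∑ i, w i * Real.exp (u i * y) - (Real.exp y - 1)) := by
    simp only [hnode, hblock, mul_left_comm _ (Real.exp (-(2 * y))), ← Finset.mul_sum]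
    ring
  rw [hfactor, abs_mul, Real.abs_exp]
  calc Real.exp (-(2 * y)) * |y * ∑ i, w i * Real.exp (u i * y) - (Real.exp y - 1)|
      ≤ Real.exp (-(2 * y)) * (y * (Real.exp (3 / 2 * y) / (3 / 2) ^ n)) := by
        gcongr
        exact h.abs_mul_sum_exp_sub_le hy (by norm_num)
    _ = 4 * (2 / 3) ^ n * (y / 4 * Real.exp (-(2 * (y / 4)))) := by
        rw [show -(2 * (y / 4)) = -(2 * y) + 3 / 2 * y by ring, Real.exp_add, div_eq_mul_inv,
          ← inv_pow, inv_div]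
        ring
    _ ≤ _ := by
        gcongr
        exact mul_exp_neg_two_mul_le (y / 4)

end IsPosQuadrature

theorem sum_exp_neg_two_pow_sub (K : ℕ) (y : ℝ) :
    ∑ j ∈ Finset.range K, (Real.exp (-(2 ^ j * y)) - Real.exp (-(2 * (2 ^ j * y)))) =
      Real.exp (-y) - Real.exp (-(2 ^ K * y)) := by
  simpa only [pow_succ', mul_assoc, pow_zero, one_mul] using
    Finset.sum_range_sub' (fun j ↦ Real.exp (-(2 ^ j * y))) K

/-- The weights of the composite rule on the dyadic blocks `[a * 2 ^ j, a * 2 ^ (j + 1)]`, `j < K`,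
built from a rule with weights `w` on `[0, 1]`. -/
def dyadicWeight {ι : Type*} {K : ℕ} (a : ℝ) (w : ι → ℝ) (p : Fin K × ι) : ℝ :=
  a * 2 ^ (p.1 : ℕ) * w p.2

/-- The nodes of the composite rule on the dyadic blocks `[a * 2 ^ j, a * 2 ^ (j + 1)]`, `j < K`,
built from a rule with nodes `u` on `[0, 1]`. The unit interval is reversed, `0` going to the right
end of a block, so that the exponential is expanded at that end. -/
def dyadicNode {ι : Type*} {K : ℕ} (a : ℝ) (u : ι → ℝ) (p : Fin K × ι) : ℝ :=
  a * 2 ^ (p.1 : ℕ) * (2 - u p.2)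

section Dyadic

variable {ι : Type*} {K : ℕ} {a : ℝ} {w u : ι → ℝ}

theorem dyadicWeight_pos (ha : 0 < a) (hw : ∀ i, 0 < w i) (p : Fin K × ι) :
    0 < dyadicWeight a w p :=
  mul_pos (by positivity) (hw _)

theorem dyadicNode_pos (ha : 0 < a) (hu : ∀ i, u i ∈ Set.Icc (0 : ℝ) 1) (p : Fin K × ι) :
    0 < dyadicNode a u p :=
  mul_pos (by positivity) (by linarith [(hu p.2).2])

theorem dyadicNode_le (ha : 0 ≤ a) (hu : ∀ i, u i ∈ Set.Icc (0 : ℝ) 1) (p : Fin K × ι) :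
    dyadicNode a u p ≤ a * 2 ^ K := by
  calc a * 2 ^ (p.1 : ℕ) * (2 - u p.2) ≤ a * 2 ^ (p.1 : ℕ) * 2 := by
        gcongr
        linarith [(hu p.2).1]
    _ = a * 2 ^ ((p.1 : ℕ) + 1) := by ring
    _ ≤ a * 2 ^ K := by
        gcongr
        · norm_num
        · exact p.1.isLt

variable [Fintype ι]

theorem mul_sum_dyadic (a x : ℝ) (w u : ι → ℝ) :
    x * ∑ p : Fin K × ι, dyadicWeight a w p * Real.exp (-(dyadicNode a u p) * x) =
      ∑ j ∈ Finset.range K, 2 ^ j * (a * x) *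
        ∑ i, w i * Real.exp (-((2 - u i) * (2 ^ j * (a * x)))) := by
  rw [Fintype.sum_prod_type, Finset.sum_range, Finset.mul_sum]
  refine Finset.sum_congr rfl fun j _ ↦ ?_
  rw [Finset.mul_sum, Finset.mul_sum]
  refine Finset.sum_congr rfl fun i _ ↦ ?_
  rw [dyadicWeight, dyadicNode,
    show -(a * 2 ^ (j : ℕ) * (2 - u i)) * x = -((2 - u i) * (2 ^ (j : ℕ) * (a * x))) by ring]
  ring

theorem IsPosQuadrature.abs_mul_sum_dyadic_sub_le {n : ℕ} (h : IsPosQuadrature n w u) {x : ℝ}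
    (hax : 0 ≤ a * x) :
    |x * ∑ p : Fin K × ι, dyadicWeight a w p * Real.exp (-(dyadicNode a u p) * x) -
      (Real.exp (-(a * x)) - Real.exp (-(2 ^ K * (a * x))))| ≤ 4 * (2 / 3) ^ n := by
  rw [mul_sum_dyadic, ← sum_exp_neg_two_pow_sub, ← Finset.sum_sub_distrib]
  calc _ ≤ ∑ j ∈ Finset.range K, _ := Finset.abs_sum_le_sum_abs _ _
    _ ≤ ∑ j ∈ Finset.range K, 4 * (2 / 3) ^ n *
          (Real.exp (-(2 ^ j * (a * x / 4))) - Real.exp (-(2 * (2 ^ j * (a * x / 4))))) := by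
        refine Finset.sum_le_sum fun j _ ↦ ?_
        rw [← mul_div_assoc]
        exact h.abs_mul_sum_exp_neg_sub_le (by positivity)
    _ = 4 * (2 / 3) ^ n * (Real.exp (-(a * x / 4)) - Real.exp (-(2 ^ K * (a * x / 4)))) := by
        rw [← Finset.mul_sum, sum_exp_neg_two_pow_sub]
    _ ≤ 4 * (2 / 3) ^ n := by
        refine mul_le_of_le_one_right (by positivity) ?_
        have : Real.exp (-(a * x / 4)) ≤ 1 := Real.exp_le_one_iff.mpr (by linarith)
        linarith [Real.exp_pos (-(2 ^ K * (a * x / 4)))]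

theorem IsPosQuadrature.abs_mul_sum_dyadic_sub_one_le {n : ℕ} (h : IsPosQuadrature n w u) {x : ℝ}
    (hax : 0 < a * x) :
    |x * ∑ p : Fin K × ι, dyadicWeight a w p * Real.exp (-(dyadicNode a u p) * x) - 1| ≤
      4 * (2 / 3) ^ n + a * x + (2 ^ K * (a * x))⁻¹ := by
  have hquad := abs_le.mp (h.abs_mul_sum_dyadic_sub_le (K := K) hax.le)
  have hleft : 1 - a * x ≤ Real.exp (-(a * x)) := Real.one_sub_le_exp_neg _
  have hleft_le : Real.exp (-(a * x)) ≤ 1 := Real.exp_le_one_iff.mpr (by linarith)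
  have hright : Real.exp (-(2 ^ K * (a * x))) ≤ (2 ^ K * (a * x))⁻¹ := by
    rw [Real.exp_neg]
    gcongr
    linarith [Real.add_one_le_exp (2 ^ K * (a * x))]
  have hright_pos := Real.exp_pos (-(2 ^ K * (a * x)))
  rw [abs_le]
  constructor <;> linarith [hquad.1, hquad.2]

end Dyadic

theorem exists_div_pow_lt_pow_le {b c p : ℝ} (hb : 1 < b) (hc : 1 ≤ c) (hp : p ∈ Set.Ioc 0 1)
    (d : ℕ) :
    ∃ k : ℕ, c / p ^ d < b ^ k ∧ b ^ k ≤ b * c / p ^ d ∧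
      k * Real.log b ≤ Real.log (b * c) + d * Real.log (1 / p) := by
  have hp0 : 0 < p := hp.1
  have hone : 1 ≤ c / p ^ d := by
    rw [one_le_div (by positivity)]
    exact (pow_le_one₀ hp0.le hp.2).trans hc
  obtain ⟨k, hle, hlt⟩ := exists_nat_pow_near hone hb
  have hupper : b ^ (k + 1) ≤ b * c / p ^ d := by
    rw [pow_succ', mul_div_assoc]
    gcongr
  refine ⟨k + 1, hlt, hupper, ?_⟩
  calc ((k + 1 : ℕ) : ℝ) * Real.log b = Real.log (b ^ (k + 1)) := (Real.log_pow _ _).symm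
    _ ≤ Real.log (b * c / p ^ d) := Real.log_le_log (by positivity) hupper
    _ = Real.log (b * c) + d * Real.log (1 / p) := by
      rw [div_eq_mul_one_div, ← one_div_pow, Real.log_mul (by positivity) (by positivity),
        Real.log_pow]

theorem exists_dyadic_depth {p : ℝ} (hp : p ∈ Set.Ioc 0 1) :
    ∃ K : ℕ, 0 < K ∧ 16 / p ^ 3 < 2 ^ K ∧ 2 ^ K ≤ 32 / p ^ 3 ∧
      (K : ℝ) ≤ 62 * (1 + Real.log (1 / p)) := by
  obtain ⟨K, hlt, hle, hlog⟩ :=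
    exists_div_pow_lt_pow_le (b := 2) (c := 16) (by norm_num) (by norm_num) hp 3
  have hlog2 : (1 : ℝ) / 2 ≤ Real.log 2 := by linarith [Real.log_two_gt_d9]
  have hlog32 : Real.log (2 * 16) ≤ 31 :=
    (Real.log_le_sub_one_of_pos (by norm_num)).trans_eq (by norm_num)
  have hlogp : 0 ≤ Real.log (1 / p) := Real.log_nonneg ((one_le_div hp.1).mpr hp.2)
  have hK : (K : ℝ) * (1 / 2) ≤ K * Real.log 2 := by gcongr
  refine ⟨K, Nat.pos_of_ne_zero ?_, hlt, hle.trans_eq (by norm_num), ?_⟩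
  · rintro rfl
    rw [pow_zero, div_lt_one (pow_pos hp.1 3)] at hlt
    linarith [pow_le_one₀ (n := 3) hp.1.le hp.2]
  · push_cast at hlog
    linear_combination 2 * hK + 2 * hlog + 2 * hlog32 + 56 * hlogp

theorem exists_quadrature_degree {p : ℝ} (hp : p ∈ Set.Ioc 0 1) :
    ∃ n : ℕ, 4 * (2 / 3) ^ n ≤ p / 2 ∧ (n + 1 : ℝ) ≤ 34 * (1 + Real.log (1 / p)) := by
  obtain ⟨n, hlt, -, hlog⟩ :=
    exists_div_pow_lt_pow_le (b := 3 / 2) (c := 8) (by norm_num) (by norm_num) hp 1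
  have hlog_base : (1 : ℝ) / 3 ≤ Real.log (3 / 2) :=
    (by norm_num : (1 : ℝ) / 3 = 1 - (3 / 2)⁻¹).trans_le
      (Real.one_sub_inv_le_log_of_pos (by norm_num))
  have hlog12 : Real.log (3 / 2 * 8) ≤ 11 :=
    (Real.log_le_sub_one_of_pos (by norm_num)).trans_eq (by norm_num)
  have hlogp : 0 ≤ Real.log (1 / p) := Real.log_nonneg ((one_le_div hp.1).mpr hp.2)
  have hn : (n : ℝ) * (1 / 3) ≤ n * Real.log (3 / 2) := by gcongr
  refine ⟨n, ?_, ?_⟩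
  · rw [pow_one, div_lt_iff₀ hp.1] at hlt
    rw [← inv_div, inv_pow, ← div_eq_mul_inv, div_le_iff₀ (by positivity)]
    linarith
  · push_cast at hlog
    linarith

theorem exists_sum_exp_abs_mul_sub_one_le {p : ℝ} (hp : p ∈ Set.Ioc 0 1) :
    ∃ (N : ℕ) (w t : Fin N → ℝ), 0 < N ∧ (N : ℝ) ≤ 2108 * (1 + Real.log (1 / p)) ^ 2 ∧
      (∀ j, 0 < w j) ∧ (∀ j, 0 < t j ∧ t j ≤ 8 / p ^ 2) ∧
      ∀ x ∈ Set.Icc p 1, |x * ∑ j, w j * Real.exp (-(t j) * x) - 1| ≤ p := by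
  have hp0 : 0 < p := hp.1
  have ha : 0 < p / 4 := by positivity
  obtain ⟨K, hK, hKlower, hKupper, hKlog⟩ := exists_dyadic_depth hp
  obtain ⟨n, hn, hnlog⟩ := exists_quadrature_degree hp
  obtain ⟨m, hm, w, u, h⟩ := exists_isPosQuadrature n
  have hm0 : 0 < m := Nat.pos_of_ne_zero (by rintro rfl; simpa using h.sum_weight)
  let e := (finProdFinEquiv (m := K) (n := m)).symm
  refine ⟨K * m, dyadicWeight (p / 4) w ∘ e, dyadicNode (p / 4) u ∘ e, Nat.mul_pos hK hm0, ?_,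
    fun _ ↦ dyadicWeight_pos ha h.weight_pos _, fun _ ↦ ⟨dyadicNode_pos ha h.node_mem _, ?_⟩, ?_⟩
  · have hmlog : (m : ℝ) ≤ 34 * (1 + Real.log (1 / p)) := le_trans (mod_cast hm) hnlog
    calc ((K * m : ℕ) : ℝ) = K * m := Nat.cast_mul K m
      _ ≤ 62 * (1 + Real.log (1 / p)) * (34 * (1 + Real.log (1 / p))) := by
        gcongr
        exact (Nat.cast_nonneg K).trans hKlog
      _ = 2108 * (1 + Real.log (1 / p)) ^ 2 := by ring
  · calc dyadicNode (p / 4) u _ ≤ p / 4 * 2 ^ K := dyadicNode_le ha.le h.node_mem _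
      _ ≤ p / 4 * (32 / p ^ 3) := by gcongr
      _ = 8 / p ^ 2 := by field_simp; norm_num
  · rintro x ⟨hpx, hx1⟩
    have hax : p / 4 * x ≤ p / 4 := mul_le_of_le_one_right ha.le hx1
    have htail : (2 ^ K * (p / 4 * x))⁻¹ ≤ p / 4 := by
      calc (2 ^ K * (p / 4 * x))⁻¹ ≤ (16 / p ^ 3 * (p / 4 * p))⁻¹ := by gcongr
        _ = p / 4 := by field_simp; norm_num
    have happrox := h.abs_mul_sum_dyadic_sub_one_le (K := K) (mul_pos ha (hp0.trans_le hpx))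
    rw [← Equiv.sum_comp e] at happrox
    exact happrox.trans (by linarith)

/-- `1/x` can be multiplicatively `δ`-approximated on `[ε, 1]` by a sum of
`poly(log(1/(εδ)))` exponentials `Σ w_j e^{-t_j x}` with `t_j = poly(1/(εδ))`. -/
theorem inv_approx_by_sum_of_exponentials :
    ∃ C : ℝ, 0 < C ∧ ∀ ε δ : ℝ, ε ∈ Set.Ioc (0 : ℝ) 1 → δ ∈ Set.Ioc (0 : ℝ) 1 →
      ∃ (N : ℕ) (w t : Fin N → ℝ), 0 < N ∧
        (N : ℝ) ≤ C * (1 + Real.log (1 / (ε * δ))) ^ C ∧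
        (∀ j, 0 < w j) ∧
        (∀ j, 0 < t j ∧ t j ≤ (C / (ε * δ)) ^ C) ∧
        ∀ x ∈ Set.Icc ε 1,
          (1 - δ) * x⁻¹ ≤ ∑ j, w j * Real.exp (-(t j) * x) ∧
          ∑ j, w j * Real.exp (-(t j) * x) ≤ (1 + δ) * x⁻¹ := by
  refine ⟨2108, by norm_num, fun ε δ ⟨hε, hε1⟩ ⟨hδ, hδ1⟩ ↦ ?_⟩
  have hp : ε * δ ∈ Set.Ioc 0 1 := ⟨mul_pos hε hδ, mul_le_one₀ hε1 hδ.le hδ1⟩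
  obtain ⟨N, w, t, hN, hNle, hw, ht, happrox⟩ := exists_sum_exp_abs_mul_sub_one_le hp
  refine ⟨N, w, t, hN, hNle.trans ?_, hw, fun j ↦ ⟨(ht j).1, (ht j).2.trans ?_⟩, fun x hx ↦ ?_⟩
  · rw [← Real.rpow_two]
    gcongr
    · linarith [Real.log_nonneg ((one_le_div hp.1).mpr hp.2)]
    · norm_num
  · have hbase : 1 ≤ 2108 / (ε * δ) := (one_le_div hp.1).mpr (by linarith [hp.2])
    calc 8 / (ε * δ) ^ 2 ≤ 2108 ^ 2 / (ε * δ) ^ 2 := by gcongr; norm_num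
      _ = (2108 / (ε * δ)) ^ (2 : ℝ) := by rw [Real.rpow_two, div_pow]
      _ ≤ (2108 / (ε * δ)) ^ (2108 : ℝ) := by gcongr; norm_num
  · have hx0 : 0 < x := hε.trans_le hx.1
    have herr := abs_le.mp <|
      (happrox x ⟨(mul_le_of_le_one_right hε.le hδ1).trans hx.1, hx.2⟩).trans
        (mul_le_of_le_one_left hδ.le hε1)
    rw [← div_eq_mul_inv, ← div_eq_mul_inv, div_le_iff₀' hx0, le_div_iff₀' hx0]
    constructor <;> linarith [herr.1, herr.2]
end
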